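/- Special braids are closed under left division: if β and γ are special braids and β' ∈ B_∞ satisfies β ▷ β' = γ, then β' is special. -/

import Mathlib

/-- The braid relations on generators indexed by `ℕ` (generator `i` stands for
the Artin generator `σ_{i+1}` of the paper). -/
def braidRels : Set (FreeGroup ℕ) :=
  {r | (∃ i j : ℕ, i + 2 ≤ j ∧
          r = .of i * .of j * (.of i)⁻¹ * (.of j)⁻¹) ∨
       (∃ i : ℕ,
          r = .of i * .of (i + 1) * .of i *
              (.of (i + 1) * .of i * .of (i + 1))⁻¹)}

/-- The braid group on infinitely many strands. -/
abbrev Binf : Type := PresentedGroup braidRels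

/-- `σ i` is the Artin generator `σ_{i+1}` of the paper (0-indexed). -/
def σ (i : ℕ) : Binf := PresentedGroup.of i

lemma mk_rel_eq_one {r : FreeGroup ℕ} (h : r ∈ braidRels) :
    PresentedGroup.mk braidRels r = 1 :=
  (QuotientGroup.eq_one_iff r).mpr (Subgroup.subset_normalClosure h)

lemma shift_lift_eq_one :
    ∀ r ∈ braidRels, FreeGroup.lift (fun n => σ (n + 1)) r = 1 := by
  intro r hr
  have key : ∀ s ∈ braidRels, FreeGroup.lift (fun n => σ (n + 1)) s
      = PresentedGroup.mk braidRels (FreeGroup.map (· + 1) s) := by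
    intro s _
    have : (FreeGroup.lift (fun n => σ (n + 1)) : FreeGroup ℕ →* Binf)
        = (PresentedGroup.mk braidRels).comp (FreeGroup.map (· + 1)) := by
      apply FreeGroup.ext_hom
      intro x
      simp [σ, PresentedGroup.of]
    rw [this]; rfl
  rw [key r hr]
  apply mk_rel_eq_one
  rcases hr with ⟨i, j, hij, rfl⟩ | ⟨i, rfl⟩
  · exact Or.inl ⟨i + 1, j + 1, by omega, by simp⟩
  · exact Or.inr ⟨i + 1, by simp⟩

/-- The shift endomorphism of the braid group, mapping `σ i` to `σ (i+1)`. -/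
def sh : Binf →* Binf := PresentedGroup.toGroup shift_lift_eq_one

@[simp] lemma sh_σ (i : ℕ) : sh (σ i) = σ (i + 1) :=
  PresentedGroup.toGroup.of shift_lift_eq_one

/-- The shifted-conjugation (selfdistributive) operation on `Binf`:
`β₁ ▷ β₂ = β₁ · sh β₂ · σ₁ · (sh β₁)⁻¹`. -/
def sc (β₁ β₂ : Binf) : Binf := β₁ * sh β₂ * σ 0 * (sh β₁)⁻¹

/-- The set of special braids: the smallest subset of `Binf` containing the
unit braid and closed under the shifted-conjugation operation `sc`. -/
def Special : Set Binf :=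
  {x | ∀ P : Binf → Prop, P 1 → (∀ a b, P a → P b → P (sc a b)) → P x}

/-!
Write `β` and `γ` as products `p` and `w` of copies of the unit braid. In the free shelf on one
generator, both `w ◃ t` and `p ◃ t` equal `x ◃ t` when `t` is a long right power of the generator
`x`. By Dehornoy's confluence theorem the terms `w ⬝ t` and `p ⬝ t` then have a common expansion;
following the left subterm `w` into it produces a term `e` with `lowerBound x p e ≼ w ≼ p ◃ e`, for
iterated left divisibility `≼`. If `w = p ◃ e`, then `β'` is the value of `e`, since `sc β` is
injective.

Otherwise the divisibility `w ≼ p ◃ e` is strict. Larue's argument for the Artin automorphisms of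
the free group on `x₀, x₁, …` shows that reduced words ending with `x₀` are preserved along left
divisibility. Decorate the unit braid with the empty word and put
`word (x ◃ y) = ρ x (freeShift (word y) * x₀)`. Then `word (p ◃ e) = ρ p x₀ * word low`, where
`low = lowerBound x p e`. Because `w = sc p β'`, applying `ρ w⁻¹` turns the first factor into a
word without `x₀`. Strictness therefore forces `ρ w⁻¹ (word low)` to end with `x₀`, and hence so
does `ρ low⁻¹ (word low)`. But the latter is `freeShift (word low)`, which contains no `x₀`.
-/

open Relation Filter
open scoped Quandles
open FreeGroup (of)

/-- Formal products of copies of a single variable: the elements of the free magma on one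
generator. -/
inductive ShelfTerm : Type
  | var : ShelfTerm
  | app : ShelfTerm → ShelfTerm → ShelfTerm

local infixr:70 " ⬝ " => ShelfTerm.app

namespace ShelfTerm

/-- One left-to-right use of the identity `a ⬝ (b ⬝ c) = (a ⬝ b) ⬝ (a ⬝ c)`, anywhere in a term. -/
inductive Step : ShelfTerm → ShelfTerm → Prop
  | distrib (a b c : ShelfTerm) : Step (a ⬝ b ⬝ c) ((a ⬝ b) ⬝ a ⬝ c)
  | left {a a' : ShelfTerm} (b : ShelfTerm) : Step a a' → Step (a ⬝ b) (a' ⬝ b)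
  | right (a : ShelfTerm) {b b' : ShelfTerm} : Step b b' → Step (a ⬝ b) (a ⬝ b')

/-- `Expands t t'` says that `t'` is an LD-expansion of `t`: finitely many `Step`s lead from `t`
to `t'`. -/
abbrev Expands : ShelfTerm → ShelfTerm → Prop := ReflTransGen Step

/-- `distribute s t` replaces every variable `x` of `t` by `s ⬝ x`, that is, it distributes `s`
in `s ⬝ t` all the way down. -/
def distribute (s : ShelfTerm) : ShelfTerm → ShelfTerm
  | var => s ⬝ var
  | a ⬝ b => distribute s a ⬝ distribute s b

/-- Dehornoy's fundamental expansion `∂t`: a common expansion of all the terms one `Step` away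
from `t`. -/
def fundamental : ShelfTerm → ShelfTerm
  | var => var
  | a ⬝ b => distribute (fundamental a) (fundamental b)

section Confluence

variable {a a' b b' c s s' t t' : ShelfTerm}

lemma Expands.app (ha : Expands a a') (hb : Expands b b') : Expands (a ⬝ b) (a' ⬝ b') :=
  (ha.lift (· ⬝ b) fun _ _ => Step.left b).trans (hb.lift (a' ⬝ ·) fun _ _ => Step.right a')

lemma expands_distribute (s t : ShelfTerm) : Expands (s ⬝ t) (distribute s t) := by
  induction t with
  | var => exact .refl
  | app a b iha ihb => exact .head (.distrib s a b) (iha.app ihb)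

lemma Expands.distribute_left (h : Expands s s') (t : ShelfTerm) :
    Expands (distribute s t) (distribute s' t) := by
  induction t with
  | var => exact h.app .refl
  | app a b iha ihb => exact iha.app ihb

lemma Step.distribute_right (s : ShelfTerm) (h : Step t t') :
    Step (distribute s t) (distribute s t') := by
  induction h with
  | distrib a b c => exact .distrib _ _ _
  | left b _ ih => exact .left _ ih
  | right a _ ih => exact .right _ ih

lemma Expands.distribute_right (s : ShelfTerm) (h : Expands t t') :
    Expands (distribute s t) (distribute s t') :=
  h.lift (distribute s) fun _ _ => Step.distribute_right s

lemma expands_distribute_distribute (a b c : ShelfTerm) :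
    Expands (distribute a (distribute b c)) (distribute (distribute a b) (distribute a c)) := by
  induction c with
  | var => exact expands_distribute (distribute a b) (a ⬝ var)
  | app _ _ ih₁ ih₂ => exact ih₁.app ih₂

lemma expands_fundamental_app (ha : Expands a (fundamental a')) (hb : Expands b (fundamental b')) :
    Expands (a ⬝ b) (fundamental (a' ⬝ b')) :=
  (ha.app hb).trans (expands_distribute _ _)

lemma expands_fundamental (t : ShelfTerm) : Expands t (fundamental t) := by
  induction t with
  | var => exact .refl
  | app a b iha ihb => exact expands_fundamental_app iha ihb

lemma Step.expands_fundamental (h : Step t t') : Expands t' (fundamental t) := by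
  induction h with
  | distrib a b c =>
    have expand (u : ShelfTerm) : Expands (a ⬝ u) (fundamental (a ⬝ u)) :=
      ShelfTerm.expands_fundamental _
    exact ((expand b).app (expand c)).trans
      ((expands_distribute _ _).distribute_right (fundamental a))
  | left b _ ih => exact expands_fundamental_app ih (ShelfTerm.expands_fundamental b)
  | right a _ ih => exact expands_fundamental_app (ShelfTerm.expands_fundamental a) ih

lemma Step.fundamental_mono (h : Step t t') : Expands (fundamental t) (fundamental t') := by
  induction h with
  | distrib a b c => exact expands_distribute_distribute _ _ _
  | left b _ ih => exact ih.distribute_left _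
  | right a _ ih => exact ih.distribute_right _

lemma Expands.fundamental_mono (h : Expands t t') : Expands (fundamental t) (fundamental t') :=
  h.lift' fundamental fun _ _ => Step.fundamental_mono

lemma expands_fundamental_iterate (n : ℕ) (t : ShelfTerm) : Expands t (fundamental^[n] t) := by
  induction n generalizing t with
  | zero => exact .refl
  | succ n ih => exact (expands_fundamental t).trans (ih _)

lemma Expands.exists_fundamental_iterate (h : Expands t t') :
    ∃ n, Expands t' (fundamental^[n] t) := by
  induction h with
  | refl => exact ⟨0, .refl⟩
  | tail _ hstep ih =>
    obtain ⟨n, hn⟩ := ih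
    refine ⟨n + 1, hstep.expands_fundamental.trans ?_⟩
    rw [Function.iterate_succ_apply']
    exact hn.fundamental_mono

lemma Expands.join (hb : Expands a b) (hc : Expands a c) : Join Expands b c := by
  obtain ⟨m, hm⟩ := hb.exists_fundamental_iterate
  obtain ⟨n, hn⟩ := hc.exists_fundamental_iterate
  refine ⟨fundamental^[n + m] a, ?_, ?_⟩
  · rw [Function.iterate_add_apply]
    exact hm.trans (expands_fundamental_iterate n _)
  · rw [add_comm, Function.iterate_add_apply]
    exact hn.trans (expands_fundamental_iterate m _)

end Confluence

end ShelfTerm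

/-- The free shelf on one generator. -/
def FreeMonogenicShelf : Type := Quot ShelfTerm.Step

namespace FreeMonogenicShelf

instance : Shelf FreeMonogenicShelf where
  act := Quot.map₂ ShelfTerm.app (fun a _ _ => .right a) (fun _ _ b => .left b)
  self_distrib := by
    rintro ⟨a⟩ ⟨b⟩ ⟨c⟩
    exact Quot.sound (.distrib a b c)

/-- The class of a term in the free shelf. -/
def mk : ShelfTerm → FreeMonogenicShelf := Quot.mk _

lemma join_expands_of_mk_eq {t t' : ShelfTerm} (h : mk t = mk t') : Join ShelfTerm.Expands t t' :=
  (equivalence_join fun _ _ _ => ShelfTerm.Expands.join).eqvGen_iff.mp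
    (EqvGen.mono (fun _ t' hstep => ⟨t', .single hstep, .refl⟩) _ _ (Quot.eqvGen_exact h))

end FreeMonogenicShelf

namespace ShelfTerm

section Eval

variable {S : Type*} [Shelf S] (g : S) {t t' : ShelfTerm}

/-- The value of a term in a shelf, with `g` substituted for the variable. -/
def eval : ShelfTerm → S
  | var => g
  | a ⬝ b => eval a ◃ eval b

lemma Step.eval_eq (h : Step t t') : eval g t = eval g t' := by
  induction h with
  | distrib a b c => exact Shelf.self_distrib
  | left b _ ih => exact congrArg (· ◃ eval g b) ih
  | right a _ ih => exact congrArg (eval g a ◃ ·) ih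

lemma Expands.eval_eq (h : Expands t t') : eval g t = eval g t' := by
  induction h with
  | refl => rfl
  | tail _ hstep ih => exact ih.trans (hstep.eval_eq g)

lemma eval_mk_var (t : ShelfTerm) : eval (.mk var) t = FreeMonogenicShelf.mk t := by
  induction t with
  | var => rfl
  | app a b iha ihb => exact congrArg₂ (· ◃ ·) iha ihb

/-- The right power `x ⬝ (x ⬝ ⋯ (x ⬝ x))` with `n + 1` occurrences of the variable. -/
def rightPow : ℕ → ShelfTerm
  | 0 => var
  | n + 1 => var ⬝ rightPow n

lemma exists_eval_act_rightPow (t : ShelfTerm) :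
    ∃ N, ∀ n ≥ N, eval g t ◃ eval g (rightPow n) = eval g (rightPow (n + 1)) := by
  induction t with
  | var => exact ⟨0, fun _ _ => rfl⟩
  | app a b iha ihb =>
    obtain ⟨A, hA⟩ := iha
    obtain ⟨B, hB⟩ := ihb
    refine ⟨A + B + 1, fun n hn => ?_⟩
    obtain ⟨m, rfl⟩ : ∃ m, n = m + 1 := ⟨n - 1, by lia⟩
    calc (eval g a ◃ eval g b) ◃ eval g (rightPow (m + 1))
        = (eval g a ◃ eval g b) ◃ eval g a ◃ eval g (rightPow m) := by rw [hA m (by lia)]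
      _ = eval g a ◃ eval g b ◃ eval g (rightPow m) := Shelf.self_distrib.symm
      _ = eval g (rightPow (m + 1 + 1)) := by rw [hB m (by lia), hA (m + 1) (by lia)]

lemma exists_join_app_distribute (w p : ShelfTerm) :
    ∃ t, Join Expands (w ⬝ t) (distribute p t) := by
  obtain ⟨A, hA⟩ := exists_eval_act_rightPow (FreeMonogenicShelf.mk var) w
  obtain ⟨B, hB⟩ := exists_eval_act_rightPow (FreeMonogenicShelf.mk var) p
  refine ⟨rightPow (A + B), FreeMonogenicShelf.join_expands_of_mk_eq ?_⟩
  rw [← eval_mk_var (w ⬝ _), ← eval_mk_var (distribute p _), ← (expands_distribute p _).eval_eq]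
  exact (hA _ (by lia)).trans (hB _ (by lia)).symm

end Eval

/-- `LeftSubterm u t` says that `t = (⋯((u ⬝ b₁) ⬝ b₂) ⋯) ⬝ bₙ` for some `n ≥ 0`. -/
inductive LeftSubterm (u : ShelfTerm) : ShelfTerm → Prop
  | refl : LeftSubterm u u
  | app {a : ShelfTerm} (b : ShelfTerm) : LeftSubterm u a → LeftSubterm u (a ⬝ b)

lemma LeftSubterm.step {t t' u : ShelfTerm} (hu : LeftSubterm u t) (h : Step t t') :
    ∃ v, Expands u v ∧ LeftSubterm v t' := by
  induction hu generalizing t' with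
  | refl => exact ⟨t', .single h, .refl⟩
  | app b hu ih =>
    cases h with
    | distrib a b c => exact ⟨u, .refl, (hu.app b).app _⟩
    | left b h =>
      obtain ⟨v, huv, hv⟩ := ih h
      exact ⟨v, huv, hv.app b⟩
    | right a h => exact ⟨u, .refl, hu.app _⟩

lemma LeftSubterm.expands {t t' u : ShelfTerm} (hu : LeftSubterm u t) (h : Expands t t') :
    ∃ v, Expands u v ∧ LeftSubterm v t' := by
  induction h with
  | refl => exact ⟨u, .refl, hu⟩
  | tail _ hstep ih =>
    obtain ⟨v, huv, hv⟩ := ih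
    obtain ⟨v', hvv', hv'⟩ := hv.step hstep
    exact ⟨v', huv.trans hvv', hv'⟩

end ShelfTerm

/-- `a` is an iterated left divisor of `b`: `b = (⋯((a ◃ c₁) ◃ c₂) ⋯) ◃ cₙ` for some `n ≥ 0`. -/
def IterLeftDvd {S : Type*} [Shelf S] : S → S → Prop := ReflTransGen fun a b => ∃ c, a ◃ c = b

local infix:50 " ≼ " => IterLeftDvd

section IterLeftDvd

variable {S : Type*} [Shelf S] {a b : S}

lemma iterLeftDvd_act (a c : S) : a ≼ a ◃ c := .single ⟨c, rfl⟩

lemma IterLeftDvd.act_left (p : S) (h : a ≼ b) : p ◃ a ≼ p ◃ b := by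
  refine ReflTransGen.lift (p ◃ ·) ?_ _ _ h
  rintro a _ ⟨c, rfl⟩
  exact ⟨p ◃ c, Shelf.self_distrib.symm⟩

namespace ShelfTerm

variable (g p : S) {t u y y' e : ShelfTerm}

lemma iterLeftDvd_eval (t : ShelfTerm) : g ≼ eval g t := by
  induction t with
  | var => exact .refl
  | app a b iha _ => exact iha.trans (iterLeftDvd_act _ _)

lemma LeftSubterm.iterLeftDvd (h : LeftSubterm u t) : eval g u ≼ eval g t := by
  induction h with
  | refl => exact .refl
  | app b _ ih => exact ih.trans (iterLeftDvd_act _ _)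

/-- Writing `e = e₁ ⬝ (e₂ ⬝ ⋯ (eₙ ⬝ x))`, the element `(p ◃ e₁) ◃ ⋯ ◃ (p ◃ eₙ) ◃ g`, which
differs from `p ◃ e` only by having `g` in place of the last factor `p ◃ g`. -/
def lowerBound : ShelfTerm → S
  | var => g
  | b ⬝ e => (p ◃ eval g b) ◃ lowerBound e

/-- `Tracks g p y e` is a relation that holds between `distribute p e` and `e` and survives
expansion of `y`, and which traps the value of every left subterm of `y` between
`lowerBound g p e'` and `p ◃ e'` for some `e'`. -/
inductive Tracks : ShelfTerm → ShelfTerm → Prop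
  | var {y : ShelfTerm} : eval g y ≼ p ◃ g → Tracks y var
  | extend {y z e : ShelfTerm} : Tracks y e → eval g (y ⬝ z) ≼ p ◃ eval g e → Tracks (y ⬝ z) e
  | app {y z b e : ShelfTerm} :
      eval g y = p ◃ eval g b → Tracks y b → Tracks z e → Tracks (y ⬝ z) (b ⬝ e)

variable {g p}

lemma tracks_distribute (p e : ShelfTerm) : Tracks g (eval g p) (distribute p e) e := by
  induction e with
  | var => exact .var .refl
  | app b e ihb ihe => exact .app ((expands_distribute p b).eval_eq g).symm ihb ihe

lemma Tracks.distrib {a b c d : ShelfTerm} (hab : eval g a = p ◃ eval g b) (ha : Tracks g p a b)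
    (hcd : Tracks g p (c ⬝ d) e) :
    ∃ e', Expands (b ⬝ e) e' ∧ Tracks g p ((a ⬝ c) ⬝ a ⬝ d) e' := by
  have act_le {e : ShelfTerm} (h : eval g (c ⬝ d) ≼ p ◃ eval g e) :
      eval g ((a ⬝ c) ⬝ a ⬝ d) ≼ p ◃ eval g (b ⬝ e) := by
    rw [← (Step.distrib a c d).eval_eq g]
    change eval g a ◃ eval g (c ⬝ d) ≼ p ◃ eval g b ◃ eval g e
    rw [Shelf.self_distrib (x := p), ← hab]
    exact h.act_left _
  cases hcd with
  | var h =>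
    exact ⟨_, .refl, .extend (.app hab ha (.var ((iterLeftDvd_act _ _).trans h))) (act_le h)⟩
  | extend hc h => exact ⟨_, .refl, .extend (.app hab ha hc) (act_le h)⟩
  | @app _ _ b₂ e₂ hcb hc hd =>
    refine ⟨_, .single (.distrib b b₂ e₂), .app ?_ (.app hab ha hc) (.app hab ha hd)⟩
    rw [eval, eval, hab, hcb, ← Shelf.self_distrib]

lemma Tracks.step (hy : Tracks g p y e) (h : Step y y') :
    ∃ e', Expands e e' ∧ Tracks g p y' e' := by
  induction hy generalizing y' with
  | var hle => exact ⟨_, .refl, .var (h.eval_eq g ▸ hle)⟩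
  | @extend y z e hy hle ih =>
    rw [h.eval_eq g] at hle
    cases h with
    | distrib _ c d =>
      exact ⟨e, .refl, .extend (.extend hy ((iterLeftDvd_act _ _).trans hle)) hle⟩
    | left _ h =>
      obtain ⟨e', he, hy'⟩ := ih h
      exact ⟨e', he, .extend hy' (he.eval_eq g ▸ hle)⟩
    | right _ h => exact ⟨e, .refl, .extend hy hle⟩
  | @app y z b e heq hy hz ihy ihz =>
    cases h with
    | distrib _ c d => exact Tracks.distrib heq hy hz
    | left _ h =>
      obtain ⟨b', hb, hy'⟩ := ihy h
      exact ⟨_, hb.app .refl, .app (by rw [← h.eval_eq, heq, hb.eval_eq]) hy' hz⟩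
    | right _ h =>
      obtain ⟨e', he, hz'⟩ := ihz h
      exact ⟨_, .app .refl he, .app heq hy hz'⟩

lemma Tracks.expands (hy : Tracks g p y e) (h : Expands y y') : ∃ e', Tracks g p y' e' := by
  induction h with
  | refl => exact ⟨e, hy⟩
  | tail _ hstep ih =>
    obtain ⟨e', hy'⟩ := ih
    obtain ⟨e'', -, hy''⟩ := hy'.step hstep
    exact ⟨e'', hy''⟩

lemma Tracks.bounds (hy : Tracks g p y e) :
    lowerBound g p e ≼ eval g y ∧ eval g y ≼ p ◃ eval g e := by
  induction hy with
  | var hle => exact ⟨iterLeftDvd_eval g _, hle⟩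
  | extend _ hle ih => exact ⟨ih.1.trans (iterLeftDvd_act _ _), hle⟩
  | app heq _ _ _ ih =>
    rw [lowerBound, eval, eval, Shelf.self_distrib, ← heq]
    exact ⟨ih.1.act_left _, ih.2.act_left _⟩

lemma Tracks.exists_bounds_leftSubterm (hy : Tracks g p y e) (hu : LeftSubterm u y) :
    ∃ e', lowerBound g p e' ≼ eval g u ∧ eval g u ≼ p ◃ eval g e' := by
  induction hy with
  | var hle => exact ⟨ShelfTerm.var, iterLeftDvd_eval g u, (hu.iterLeftDvd g).trans hle⟩
  | extend hy hle ih =>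
    cases hu with
    | refl => exact ⟨_, (hy.extend hle).bounds⟩
    | app _ hu => exact ih hu
  | app heq hy hz ih _ =>
    cases hu with
    | refl => exact ⟨_, (hy.app heq hz).bounds⟩
    | app _ hu => exact ih hu

theorem exists_lowerBound_iterLeftDvd (g : S) (w p : ShelfTerm) :
    ∃ e, lowerBound g (eval g p) e ≼ eval g w ∧ eval g w ≼ eval g p ◃ eval g e := by
  obtain ⟨t, y, hwy, hpy⟩ := exists_join_app_distribute w p
  obtain ⟨v, hwv, hv⟩ := (LeftSubterm.refl.app t).expands hwy
  obtain ⟨e, hy⟩ := (tracks_distribute (g := g) p t).expands hpy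
  rw [hwv.eval_eq g]
  exact hy.exists_bounds_leftSubterm hv

end ShelfTerm

end IterLeftDvd

section BraidGroup

lemma commute_σ {i j : ℕ} (hij : i + 2 ≤ j) : Commute (σ i) (σ j) := by
  have rel := mk_rel_eq_one (Or.inl ⟨i, j, hij, rfl⟩)
  simp only [map_mul, map_inv] at rel
  exact mul_inv_eq_iff_eq_mul.mp (mul_inv_eq_one.mp rel)

lemma σ_braid (i : ℕ) : σ i * σ (i + 1) * σ i = σ (i + 1) * σ i * σ (i + 1) := by
  have rel := mk_rel_eq_one (Or.inr ⟨i, rfl⟩)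
  simp only [map_mul, map_inv] at rel
  exact mul_inv_eq_one.mp rel

lemma commute_σ_zero_sh_sh (b : Binf) : Commute (σ 0) (sh (sh b)) := by
  have hb := PresentedGroup.generated_by _ ((Subgroup.centralizer {σ 0}).comap (sh.comp sh))
    (fun j => Subgroup.mem_centralizer_singleton_iff.mpr ?_) b
  · exact (Subgroup.mem_centralizer_singleton_iff.mp hb).symm
  · change sh (sh (σ j)) * σ 0 = σ 0 * sh (sh (σ j))
    rw [sh_σ, sh_σ]
    exact (commute_σ (by lia)).symm.eq

lemma sc_selfDistrib (a b c : Binf) : sc a (sc b c) = sc (sc a b) (sc a c) := by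
  have comm_a : (sh (sh a))⁻¹ * σ 0 * sh (sh a) = σ 0 := by
    rw [← (commute_σ_zero_sh_sh a).inv_right.eq, inv_mul_cancel_right]
  have comm_b : (sh (sh b))⁻¹ * σ 0 = σ 0 * (sh (sh b))⁻¹ :=
    (commute_σ_zero_sh_sh b).inv_right.eq.symm
  symm
  calc sc (sc a b) (sc a c)
      = a * sh b * (σ 0 * sh (sh c)) * σ 1 * ((sh (sh a))⁻¹ * σ 0 * sh (sh a))
          * (σ 1)⁻¹ * (sh (sh b))⁻¹ * (sh a)⁻¹ := by
        simp only [sc, map_mul, map_inv, sh_σ]; group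
    _ = a * sh b * sh (sh c) * (σ 0 * σ 1 * σ 0) * (σ 1)⁻¹ * (sh (sh b))⁻¹ * (sh a)⁻¹ := by
        rw [comm_a, (commute_σ_zero_sh_sh c).eq]; group
    _ = a * sh b * sh (sh c) * σ 1 * (σ 0 * (sh (sh b))⁻¹) * (sh a)⁻¹ := by
        rw [σ_braid 0]; group
    _ = sc a (sc b c) := by
        rw [← comm_b]; simp only [sc, map_mul, map_inv, sh_σ]; group

/-- The braid `σ₁ σ₂ ⋯ σₙ` of the paper. Conjugation by it agrees with `sh` on all braids with at
most `n` strands. -/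
def δ : ℕ → Binf
  | 0 => 1
  | n + 1 => δ n * σ n

lemma commute_δ_σ {n j : ℕ} (hnj : n + 1 ≤ j) : Commute (δ n) (σ j) := by
  induction n with
  | zero => exact .one_left _
  | succ n ih => exact (ih (by lia)).mul_left (commute_σ (by lia))

lemma semiconjBy_δ_σ {n i : ℕ} (hin : i + 2 ≤ n) : SemiconjBy (δ n) (σ i) (σ (i + 1)) := by
  induction n, hin using Nat.le_induction with
  | base =>
    have braid : SemiconjBy (σ i * σ (i + 1)) (σ i) (σ (i + 1)) :=
      (σ_braid i).trans (mul_assoc _ _ _)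
    rw [δ, δ, mul_assoc]
    exact SemiconjBy.mul_left (commute_δ_σ le_rfl) braid
  | succ n hin ih => exact ih.mul_left (commute_σ hin).symm

lemma eventually_semiconjBy_δ_sh (b : Binf) : ∀ᶠ n in atTop, SemiconjBy (δ n) b (sh b) := by
  have hb : b ∈ Subgroup.closure (Set.range PresentedGroup.of) :=
    PresentedGroup.closure_range_of braidRels ▸ Subgroup.mem_top b
  induction hb using Subgroup.closure_induction with
  | mem _ h =>
    obtain ⟨i, rfl⟩ := h
    filter_upwards [eventually_ge_atTop (i + 2)] with n hn
    rw [← σ, sh_σ]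
    exact semiconjBy_δ_σ hn
  | one => simp
  | mul _ _ _ _ iha ihb =>
    filter_upwards [iha, ihb] with n ha hb
    rw [map_mul]
    exact ha.mul_right hb
  | inv _ _ iha =>
    filter_upwards [iha] with n ha
    rw [map_inv]
    exact ha.inv_right

lemma sh_injective : Function.Injective sh := by
  intro a b hab
  obtain ⟨n, ha, hb⟩ := ((eventually_semiconjBy_δ_sh a).and (eventually_semiconjBy_δ_sh b)).exists
  exact mul_left_cancel (ha.eq.trans ((congrArg (· * δ n) hab).trans hb.eq.symm))

lemma sc_injective (a : Binf) : Function.Injective (sc a) := fun _ _ hbc =>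
  sh_injective <| mul_left_cancel <| mul_right_cancel <| mul_right_cancel hbc

end BraidGroup

section FreeGroup

lemma freeGroup_induction_left {α : Type*} {P : FreeGroup α → Prop} (one : P 1)
    (of_mul : ∀ a g, P g → P (of a * g)) (inv_of_mul : ∀ a g, P g → P ((of a)⁻¹ * g))
    (g : FreeGroup α) : P g := by
  have hg : g ∈ Subgroup.closure (Set.range of) :=
    FreeGroup.closure_range_of α ▸ Subgroup.mem_top g
  induction hg using Subgroup.closure_induction_left with
  | one => exact one
  | mul_left _ ha g _ ih => obtain ⟨a, rfl⟩ := ha; exact of_mul a g ih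
  | inv_mul_cancel _ ha g _ ih => obtain ⟨a, rfl⟩ := ha; exact inv_of_mul a g ih

/-- The reduced word of `g` ends with the letter `a` (and not `a⁻¹`). -/
def EndsWith {α : Type*} [DecidableEq α] (a : α) (g : FreeGroup α) : Prop :=
  g.toWord.getLast? = some (a, true)

variable {α : Type*} [DecidableEq α] {a b : α} {g : FreeGroup α}

lemma not_endsWith_one (a : α) : ¬ EndsWith a 1 := by
  simp [EndsWith]

lemma endsWith_of_mul : EndsWith a (of b * g) ↔ EndsWith a g ∨ b = a ∧ g = 1 := by
  have word : (of b * g).toWord = FreeGroup.reduce ((b, true) :: g.toWord) := by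
    rw [FreeGroup.toWord_mul, FreeGroup.toWord_of, List.singleton_append]
  rw [EndsWith, EndsWith, word, FreeGroup.reduce.cons, FreeGroup.reduce_toWord,
    ← FreeGroup.toWord_eq_nil_iff]
  match g.toWord with
  | [] => simp
  | [(c, s)] => cases s <;> by_cases b = c <;> simp_all
  | (c, s) :: d :: l => cases s <;> by_cases b = c <;> simp_all

lemma endsWith_inv_of_mul :
    EndsWith a ((of b)⁻¹ * g) ↔ EndsWith a g ∧ ¬ (b = a ∧ g = of b) := by
  obtain ⟨h, rfl⟩ : ∃ h, g = of b * h := ⟨(of b)⁻¹ * g, (mul_inv_cancel_left _ _).symm⟩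
  rw [inv_mul_cancel_left, endsWith_of_mul, mul_eq_left]
  refine ⟨fun hh => ⟨.inl hh, ?_⟩, fun hh => hh.1.resolve_right hh.2⟩
  rintro ⟨-, rfl⟩
  exact not_endsWith_one a hh

end FreeGroup

section FreeShift

/-- The endomorphism `xᵢ ↦ xᵢ₊₁` of the free group on `x₀, x₁, …`. -/
def freeShift : FreeGroup ℕ →* FreeGroup ℕ := FreeGroup.map (· + 1)

variable {g : FreeGroup ℕ}

@[simp] lemma freeShift_of (i : ℕ) : freeShift (of i) = of (i + 1) := FreeGroup.map.of

lemma endsWith_zero_freeShift_mul (z : FreeGroup ℕ) :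
    EndsWith 0 (freeShift z * g) ↔ EndsWith 0 g := by
  induction z using freeGroup_induction_left with
  | one => rw [map_one, one_mul]
  | of_mul i z ih => simp [mul_assoc, endsWith_of_mul, ih]
  | inv_of_mul i z ih => simp [mul_assoc, endsWith_inv_of_mul, ih]

lemma not_endsWith_zero_freeShift (z : FreeGroup ℕ) : ¬ EndsWith 0 (freeShift z) := by
  rw [← mul_one (freeShift z), endsWith_zero_freeShift_mul]
  exact not_endsWith_one 0

lemma endsWith_zero_freeShift_mul_of_zero (z : FreeGroup ℕ) :
    EndsWith 0 (freeShift z * of 0) := by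
  rw [endsWith_zero_freeShift_mul]
  simp [EndsWith]

lemma endsWith_zero_map_iff (φ : MulAut (FreeGroup ℕ)) (hφ₀ : φ (of 0) = of 0)
    (hφ : ∀ y, ∃ z, φ (freeShift y) = freeShift z) (g : FreeGroup ℕ) :
    EndsWith 0 (φ g) ↔ EndsWith 0 g := by
  have peel_shift (y g : FreeGroup ℕ) (ih : EndsWith 0 (φ g) ↔ EndsWith 0 g) :
      EndsWith 0 (φ (freeShift y * g)) ↔ EndsWith 0 (freeShift y * g) := by
    obtain ⟨z, hz⟩ := hφ y
    rw [map_mul, hz, endsWith_zero_freeShift_mul, endsWith_zero_freeShift_mul, ih]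
  induction g using freeGroup_induction_left with
  | one => rw [map_one]
  | of_mul i g ih =>
    cases i with
    | zero => simp only [map_mul, hφ₀, endsWith_of_mul, ih, map_eq_one_iff φ φ.injective]
    | succ i => exact freeShift_of i ▸ peel_shift (of i) g ih
  | inv_of_mul i g ih =>
    cases i with
    | zero =>
      have fixed : φ g = of 0 ↔ g = of 0 := by simpa only [hφ₀] using φ.injective.eq_iff (b := of 0)
      simp only [map_mul, map_inv, hφ₀, endsWith_inv_of_mul, ih, fixed]
    | succ i => exact freeShift_of i ▸ map_inv freeShift _ ▸ peel_shift (of i)⁻¹ g ih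

end FreeShift

section ArtinRepresentation

/-- The Artin automorphism `xᵢ ↦ xᵢ⁻¹ xᵢ₊₁ xᵢ`, `xᵢ₊₁ ↦ xᵢ` of the free group. -/
def artin (i : ℕ) : MulAut (FreeGroup ℕ) :=
  MonoidHom.toMulEquiv
    (FreeGroup.lift fun k =>
      if k = i then (of i)⁻¹ * of (i + 1) * of i else if k = i + 1 then of i else of k)
    (FreeGroup.lift fun k =>
      if k = i then of (i + 1) else
        if k = i + 1 then of (i + 1) * of i * (of (i + 1))⁻¹ else of k)
    (by ext k; by_cases k = i <;> by_cases k = i + 1 <;> simp_all [mul_assoc])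
    (by ext k; by_cases k = i <;> by_cases k = i + 1 <;> simp_all [mul_assoc])

lemma artin_of_self (i : ℕ) : artin i (of i) = (of i)⁻¹ * of (i + 1) * of i := by
  simp [artin]

lemma artin_of_succ (i : ℕ) : artin i (of (i + 1)) = of i := by
  simp [artin]

lemma artin_of_of_ne {i k : ℕ} (hk : k ≠ i) (hk' : k ≠ i + 1) : artin i (of k) = of k := by
  simp [artin, hk, hk']

lemma freeGroup_mulAut_ext {α : Type*} {φ ψ : MulAut (FreeGroup α)}
    (h : ∀ k, φ (of k) = ψ (of k)) : φ = ψ :=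
  MulEquiv.toMonoidHom_injective (FreeGroup.ext_hom _ _ h)

lemma commute_artin {i j : ℕ} (hij : i + 2 ≤ j) : Commute (artin i) (artin j) := by
  have fixed_i {k : ℕ} (hk : i + 2 ≤ k) : artin i (of k) = of k :=
    artin_of_of_ne (by lia) (by lia)
  have fixed_j {k : ℕ} (hk : k < j) : artin j (of k) = of k :=
    artin_of_of_ne (by lia) (by lia)
  refine freeGroup_mulAut_ext fun k => ?_
  change artin i (artin j (of k)) = artin j (artin i (of k))
  rcases lt_or_ge k j with hkj | hjk
  · rw [fixed_j hkj]
    obtain rfl | rfl | ⟨hi, hi'⟩ : k = i ∨ k = i + 1 ∨ k ≠ i ∧ k ≠ i + 1 := by lia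
    · simp only [artin_of_self, map_mul, map_inv, fixed_j hkj, fixed_j hij]
    · rw [artin_of_succ, fixed_j (by lia)]
    · rw [artin_of_of_ne hi hi', fixed_j hkj]
  · rw [fixed_i (hij.trans hjk)]
    obtain rfl | rfl | ⟨hj, hj'⟩ : k = j ∨ k = j + 1 ∨ k ≠ j ∧ k ≠ j + 1 := by lia
    · simp only [artin_of_self, map_mul, map_inv, fixed_i hij, fixed_i (hij.trans k.le_succ)]
    · rw [artin_of_succ, fixed_i hij]
    · rw [artin_of_of_ne hj hj', fixed_i (hij.trans hjk)]

lemma artin_braid (i : ℕ) :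
    artin i * artin (i + 1) * artin i = artin (i + 1) * artin i * artin (i + 1) := by
  have fixed : artin (i + 1) (of i) = of i := artin_of_of_ne (by lia) (by lia)
  have fixed' : artin i (of (i + 1 + 1)) = of (i + 1 + 1) := artin_of_of_ne (by lia) (by lia)
  refine freeGroup_mulAut_ext fun k => ?_
  change artin i (artin (i + 1) (artin i (of k))) =
    artin (i + 1) (artin i (artin (i + 1) (of k)))
  obtain rfl | rfl | rfl | ⟨hk, hk', hk''⟩ :
      k = i ∨ k = i + 1 ∨ k = i + 1 + 1 ∨ k ≠ i ∧ k ≠ i + 1 ∧ k ≠ i + 1 + 1 := by lia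
  · simp only [artin_of_self, artin_of_succ, map_mul, map_inv, fixed, fixed']
    group
  · simp only [artin_of_self, artin_of_succ, map_mul, map_inv, fixed, fixed']
  · simp only [artin_of_succ, fixed, fixed']
  · simp only [artin_of_of_ne hk hk', artin_of_of_ne hk' hk'']

lemma lift_artin_eq_one : ∀ r ∈ braidRels, FreeGroup.lift artin r = 1 := by
  rintro _ (⟨i, j, hij, rfl⟩ | ⟨i, rfl⟩)
  · simp only [map_mul, map_inv, FreeGroup.lift_apply_of]
    rw [(commute_artin hij).eq, mul_inv_cancel_right, mul_inv_cancel]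
  · simp only [map_mul, map_inv, FreeGroup.lift_apply_of]
    rw [artin_braid, mul_inv_cancel]

/-- Artin's action of the braid group on the free group. -/
def ρ : Binf →* MulAut (FreeGroup ℕ) := PresentedGroup.toGroup lift_artin_eq_one

lemma ρ_σ (i : ℕ) : ρ (σ i) = artin i := PresentedGroup.toGroup.of lift_artin_eq_one

lemma ρ_sh_of_zero (b : Binf) : ρ (sh b) (of 0) = of 0 := by
  have hb := PresentedGroup.generated_by _
    ((MulAction.stabilizer (MulAut (FreeGroup ℕ)) (of 0 : FreeGroup ℕ)).comap (ρ.comp sh))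
    (fun j => ?_) b
  · exact hb
  · change ρ (sh (σ j)) (of 0) = of 0
    rw [sh_σ, ρ_σ]
    exact artin_of_of_ne (by lia) (by lia)

lemma artin_succ_freeShift (i : ℕ) (y : FreeGroup ℕ) :
    artin (i + 1) (freeShift y) = freeShift (artin i y) := by
  refine DFunLike.congr_fun (FreeGroup.ext_hom
    ((artin (i + 1)).toMonoidHom.comp freeShift) (freeShift.comp (artin i).toMonoidHom)
    fun k => ?_) y
  change artin (i + 1) (freeShift (of k)) = freeShift (artin i (of k))
  rw [freeShift_of]
  obtain rfl | rfl | ⟨hk, hk'⟩ : k = i ∨ k = i + 1 ∨ k ≠ i ∧ k ≠ i + 1 := by lia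
  · simp only [artin_of_self, map_mul, map_inv, freeShift_of]
  · rw [artin_of_succ, artin_of_succ, freeShift_of]
  · rw [artin_of_of_ne hk hk', artin_of_of_ne (by lia) (by lia), freeShift_of]

lemma ρ_sh_freeShift (b : Binf) (y : FreeGroup ℕ) :
    ρ (sh b) (freeShift y) = freeShift (ρ b y) := by
  have hb : b ∈ Subgroup.closure (Set.range PresentedGroup.of) :=
    PresentedGroup.closure_range_of braidRels ▸ Subgroup.mem_top b
  induction hb using Subgroup.closure_induction generalizing y with
  | mem _ h =>
    obtain ⟨i, rfl⟩ := h
    rw [← σ, sh_σ, ρ_σ, ρ_σ, artin_succ_freeShift]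
  | one => simp only [map_one, MulAut.one_apply]
  | mul _ _ _ _ iha ihb => simp only [map_mul, MulAut.mul_apply, iha, ihb]
  | inv a _ iha =>
    rw [map_inv, map_inv, MulAut.inv_apply, MulEquiv.symm_apply_eq, iha, map_inv,
      MulAut.apply_inv_self]

lemma artin_zero_freeShift_freeShift (z : FreeGroup ℕ) :
    artin 0 (freeShift (freeShift z)) = freeShift (freeShift z) := by
  refine DFunLike.congr_fun (FreeGroup.ext_hom
    ((artin 0).toMonoidHom.comp (freeShift.comp freeShift)) (freeShift.comp freeShift)
    fun k => ?_) z
  change artin 0 (freeShift (freeShift (of k))) = freeShift (freeShift (of k))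
  rw [freeShift_of, freeShift_of]
  exact artin_of_of_ne (by lia) (by lia)

lemma endsWith_zero_ρ_sh (b : Binf) (g : FreeGroup ℕ) :
    EndsWith 0 (ρ (sh b) g) ↔ EndsWith 0 g :=
  endsWith_zero_map_iff _ (ρ_sh_of_zero b) (fun y => ⟨_, ρ_sh_freeShift b y⟩) g

lemma EndsWith.artin_zero {g : FreeGroup ℕ} (hg : EndsWith 0 g) : EndsWith 0 (artin 0 g) := by
  have of_inv_mul {g h : FreeGroup ℕ} (hg : EndsWith 0 g) (hgh : artin 0 g = (of 0)⁻¹ * h)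
      (hh : EndsWith 0 h) : EndsWith 0 (artin 0 g) := by
    rw [hgh, endsWith_inv_of_mul]
    refine ⟨hh, fun ⟨_, h_eq⟩ => not_endsWith_one 0 ?_⟩
    rw [h_eq, inv_mul_cancel, map_eq_one_iff _ (artin 0).injective] at hgh
    exact hgh ▸ hg
  induction g using freeGroup_induction_left with
  | one => rwa [map_one]
  | of_mul i g ih =>
    have tail_or := endsWith_of_mul.mp hg
    obtain rfl | rfl | ⟨h0, h1⟩ : i = 0 ∨ i = 1 ∨ i ≠ 0 ∧ i ≠ 1 := by lia
    · have body : EndsWith 0 (of 0 * artin 0 g) :=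
        endsWith_of_mul.mpr (tail_or.imp ih (And.imp_right fun h => by rw [h, map_one]))
      refine of_inv_mul hg (h := of 1 * (of 0 * artin 0 g)) ?_ (endsWith_of_mul.mpr (.inl body))
      rw [map_mul, artin_of_self, mul_assoc, mul_assoc]
    · rw [map_mul, artin_of_succ]
      exact endsWith_of_mul.mpr (.inl (ih (tail_or.resolve_right (by simp))))
    · rw [map_mul, artin_of_of_ne h0 h1]
      exact endsWith_of_mul.mpr (.inl (ih (tail_or.resolve_right (by simp [h0]))))
  | inv_of_mul i g ih =>
    have tail := ih (endsWith_inv_of_mul.mp hg).1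
    obtain rfl | rfl | ⟨h0, h1⟩ : i = 0 ∨ i = 1 ∨ i ≠ 0 ∧ i ≠ 1 := by lia
    · refine of_inv_mul hg (h := (of 1)⁻¹ * (of 0 * artin 0 g)) ?_ ?_
      · rw [map_mul, map_inv, artin_of_self]
        group
      · exact endsWith_inv_of_mul.mpr ⟨endsWith_of_mul.mpr (.inl tail), by simp⟩
    · exact of_inv_mul hg (by rw [map_mul, map_inv, artin_of_succ]) tail
    · rw [map_mul, map_inv, artin_of_of_ne h0 h1]
      exact endsWith_inv_of_mul.mpr ⟨tail, by simp [h0]⟩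

lemma ρ_sc_of_zero (a b : Binf) : ρ (sc a b) (of 0) = ρ a (ρ (sh b) (ρ (σ 0) (of 0))) := by
  simp only [sc, map_mul, MulAut.mul_apply, ← map_inv, ρ_sh_of_zero]

lemma ρ_sc_freeShift (a b : Binf) (u : FreeGroup ℕ) :
    ρ (sc a b) (freeShift (ρ a u)) = ρ a (ρ (sh b) (ρ (σ 0) (freeShift u))) := by
  simp only [sc, map_mul, MulAut.mul_apply, ← ρ_sh_freeShift, map_inv, MulAut.inv_apply_self]

lemma ρ_sc_freeShift_of_zero (a b : Binf) :
    ρ (sc a b) (freeShift (ρ a (of 0))) = ρ a (of 0) := by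
  rw [ρ_sc_freeShift, freeShift_of, ρ_σ, artin_of_succ, ρ_sh_of_zero]

end ArtinRepresentation

/-- A braid `braid` together with an element `word` of the free group. The words are multiplied so
that `x ≼ y` implies `EndsWith 0 (ρ x.braid⁻¹ (y ◃ c).word)`, which makes strict iterated left
divisibility visible. -/
@[ext] structure DecoratedBraid where
  braid : Binf
  word : FreeGroup ℕ

namespace DecoratedBraid

instance : One DecoratedBraid := ⟨⟨1, 1⟩⟩

lemma act_word_selfDistrib (a b : Binf) (w : FreeGroup ℕ) :
    ρ (sc a b) (freeShift (ρ a (freeShift w * of 0)) * of 0) =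
      ρ a (freeShift (ρ b (freeShift w * of 0)) * of 0) := by
  have fixed : ρ (σ 0) (freeShift (freeShift w * of 0) * of 0) =
      freeShift (freeShift w * of 0) * of 0 := by
    simp only [map_mul, ρ_σ, artin_zero_freeShift_freeShift, freeShift_of, artin_of_succ,
      artin_of_self]
    group
  rw [map_mul, ρ_sc_freeShift, ρ_sc_of_zero, ← map_mul, ← map_mul, ← map_mul, fixed, map_mul,
    ρ_sh_freeShift, ρ_sh_of_zero]

instance : Shelf DecoratedBraid where
  act x y := ⟨sc x.braid y.braid, ρ x.braid (freeShift y.word * of 0)⟩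
  self_distrib {x y z} :=
    DecoratedBraid.ext (sc_selfDistrib _ _ _) (act_word_selfDistrib x.braid y.braid z.word).symm

lemma braid_act (x y : DecoratedBraid) : (x ◃ y).braid = sc x.braid y.braid := rfl

lemma word_act (x y : DecoratedBraid) :
    (x ◃ y).word = ρ x.braid (freeShift y.word * of 0) := rfl

variable {x y : DecoratedBraid}

lemma endsWith_zero_ρ_of_iterLeftDvd (hxy : x ≼ y) {h : FreeGroup ℕ} (hh : EndsWith 0 h) :
    EndsWith 0 (ρ (x.braid⁻¹ * y.braid) h) := by
  induction hxy generalizing h with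
  | refl => simpa using hh
  | @tail y _ _ hstep ih =>
    obtain ⟨c, rfl⟩ := hstep
    have eq : x.braid⁻¹ * (y ◃ c).braid =
        x.braid⁻¹ * y.braid * (sh c.braid * (σ 0 * sh y.braid⁻¹)) := by
      simp only [braid_act, sc, map_inv, mul_assoc]
    rw [eq, map_mul, MulAut.mul_apply]
    apply ih
    rw [map_mul, MulAut.mul_apply, endsWith_zero_ρ_sh, map_mul, MulAut.mul_apply, ρ_σ]
    exact ((endsWith_zero_ρ_sh _ _).mpr hh).artin_zero

lemma endsWith_zero_ρ_word_act (hxy : x ≼ y) (c : DecoratedBraid) :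
    EndsWith 0 (ρ x.braid⁻¹ (y ◃ c).word) := by
  rw [word_act, ← MulAut.mul_apply, ← map_mul]
  exact endsWith_zero_ρ_of_iterLeftDvd hxy (endsWith_zero_freeShift_mul_of_zero _)

lemma word_act_eval (p : DecoratedBraid) (e : ShelfTerm) :
    (p ◃ e.eval 1).word = ρ p.braid (of 0) * (ShelfTerm.lowerBound 1 p e).word := by
  induction e with
  | var =>
    change ρ p.braid (freeShift 1 * of 0) = ρ p.braid (of 0) * 1
    rw [map_one, one_mul, mul_one]
  | app b e _ ih =>
    rw [ShelfTerm.eval, Shelf.self_distrib, word_act, ih, ShelfTerm.lowerBound, word_act,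
      map_mul freeShift, mul_assoc, map_mul, braid_act, ρ_sc_freeShift_of_zero]

lemma ρ_braid_freeShift_word_lowerBound (p : DecoratedBraid) (e : ShelfTerm) :
    ρ (ShelfTerm.lowerBound 1 p e).braid (freeShift (ShelfTerm.lowerBound 1 p e).word) =
      (ShelfTerm.lowerBound 1 p e).word := by
  induction e with
  | var =>
    change ρ 1 (freeShift 1) = 1
    rw [map_one, map_one, MulAut.one_apply]
  | app b e _ ih =>
    rw [ShelfTerm.lowerBound, braid_act, word_act, ρ_sc_freeShift, map_mul, freeShift_of, map_mul,
      ρ_σ, artin_zero_freeShift_freeShift, artin_of_succ, map_mul, ρ_sh_freeShift, ih,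
      ρ_sh_of_zero]

lemma act_ne_act_eval {p w b : DecoratedBraid} {β' : Binf} {e : ShelfTerm}
    (hw : w.braid = sc p.braid β') (hlow : ShelfTerm.lowerBound 1 p e ≼ w) (hwb : w ≼ b)
    (c : DecoratedBraid) : b ◃ c ≠ p ◃ e.eval 1 := by
  intro hbc
  set low := ShelfTerm.lowerBound 1 p e
  have cancel : ρ w.braid⁻¹ (ρ p.braid (of 0)) = freeShift (ρ p.braid (of 0)) := by
    rw [map_inv, MulAut.inv_apply, MulEquiv.symm_apply_eq, hw, ρ_sc_freeShift_of_zero]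
  have ends_w : EndsWith 0 (ρ w.braid⁻¹ low.word) := by
    have ends := endsWith_zero_ρ_word_act hwb c
    rwa [hbc, word_act_eval, map_mul, cancel, endsWith_zero_freeShift_mul] at ends
  have ends_low := endsWith_zero_ρ_of_iterLeftDvd hlow ends_w
  rw [← MulAut.mul_apply, ← map_mul, mul_inv_cancel_right, map_inv,
    ← ρ_braid_freeShift_word_lowerBound p e, MulAut.inv_apply_self] at ends_low
  exact not_endsWith_zero_freeShift _ ends_low

lemma mem_special_iff {β : Binf} :
    β ∈ Special ↔ ∃ t : ShelfTerm, (t.eval (1 : DecoratedBraid)).braid = β := by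
  constructor
  · intro hβ
    refine hβ (fun b => ∃ t : ShelfTerm, (t.eval (1 : DecoratedBraid)).braid = b) ⟨.var, rfl⟩ ?_
    rintro _ _ ⟨s, rfl⟩ ⟨t, rfl⟩
    exact ⟨.app s t, rfl⟩
  · rintro ⟨t, rfl⟩ P one act
    induction t with
    | var => exact one
    | app s t ihs iht => exact act _ _ ihs iht

end DecoratedBraid

/-- special braids are closed under left division. -/
theorem special_closed_left_division (β γ β' : Binf)
    (hβ : β ∈ Special) (hγ : γ ∈ Special) (h : sc β β' = γ) :
    β' ∈ Special := by
  obtain ⟨p, rfl⟩ := DecoratedBraid.mem_special_iff.mp hβ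
  obtain ⟨w, rfl⟩ := DecoratedBraid.mem_special_iff.mp hγ
  obtain ⟨e, hlow, hup⟩ := ShelfTerm.exists_lowerBound_iterLeftDvd (1 : DecoratedBraid) w p
  rcases hup.cases_tail with heq | ⟨b, hwb, c, hbc⟩
  · refine DecoratedBraid.mem_special_iff.mpr ⟨e, ?_⟩
    exact sc_injective _ ((congrArg DecoratedBraid.braid heq).trans h.symm)
  · exact absurd hbc (DecoratedBraid.act_ne_act_eval h.symm hlow hwb c)
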